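/- Let q, q¹, …, qᵐ be probability measures on a measurable space X and b ∈ ℝᵐ, and assume the Slater condition: there exist a probability measure p̂ and ζ > 0 with KL(qⁱ‖p̂) ≤ bᵢ − ζ for all i. Let λ* ∈ ℝ₊ᵐ be a maximizer of the dual function g(λ) = inf_p [KL(q‖p) + Σᵢ λᵢ (KL(qⁱ‖p) − bᵢ)]. Then the mixture q_mix^{(λ*)} = (q + Σᵢ λ*ᵢ qⁱ)/(1 + Σᵢ λ*ᵢ) is an optimal solution of the constrained problem: it is feasible, i.e., KL(qⁱ‖q_mix^{(λ*)}) ≤ bᵢ for all i, and KL(q‖q_mix^{(λ*)}) = inf{KL(q‖p) : p a probability measure with KL(qⁱ‖p) ≤ bᵢ for all i}. -/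

import Mathlib

open MeasureTheory

/-- The Kullback–Leibler divergence `KL(μ‖ν)`, with values in `EReal`. -/
noncomputable def KL {X : Type*} [MeasurableSpace X] (μ ν : Measure X) : EReal :=
  open Classical in
  if μ ≪ ν ∧ Integrable (llr μ ν) μ then ((∫ x, llr μ ν x ∂μ : ℝ) : EReal) else ⊤

/-- The dual function `g(λ) = inf over probability measures p of
`KL(q‖p) + ∑ i, λ i * (KL(qⁱ‖p) − b i)`. -/
noncomputable def dualFn {X : Type*} [MeasurableSpace X] {m : ℕ}
    (q : Measure X) (qi : Fin m → Measure X) (b : Fin m → ℝ) (l : Fin m → ℝ) : EReal :=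
  ⨅ p : {p : Measure X // IsProbabilityMeasure p},
    KL q p.1 + ∑ i, (l i : EReal) * (KL (qi i) p.1 - (b i : EReal))

/-- The mixture distribution `q_mix^{(λ)} = (q + ∑ i, λ i • qⁱ) / (1 + ∑ i, λ i)`. -/
noncomputable def qMix {X : Type*} [MeasurableSpace X] {m : ℕ}
    (q : Measure X) (qi : Fin m → Measure X) (l : Fin m → ℝ) : Measure X :=
  (ENNReal.ofReal (1 + ∑ i, l i))⁻¹ • (q + ∑ i, ENNReal.ofReal (l i) • qi i)

open MeasureTheory Filter Topology

/-- Finiteness of the divergence. -/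
def FinKL {X : Type*} [MeasurableSpace X] (μ ν : Measure X) : Prop :=
  μ ≪ ν ∧ Integrable (llr μ ν) μ

lemma KL_of_fin {X : Type*} [MeasurableSpace X] {μ ν : Measure X} (h : FinKL μ ν) :
    KL μ ν = ((∫ x, llr μ ν x ∂μ : ℝ) : EReal) := by
  unfold KL
  exact if_pos h

lemma KL_of_not_fin {X : Type*} [MeasurableSpace X] {μ ν : Measure X} (h : ¬ FinKL μ ν) :
    KL μ ν = ⊤ := by
  unfold KL
  exact if_neg h

lemma KL_ne_bot {X : Type*} [MeasurableSpace X] (μ ν : Measure X) : KL μ ν ≠ ⊥ := by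
  by_cases h : FinKL μ ν
  · rw [KL_of_fin h]; exact EReal.coe_ne_bot _
  · rw [KL_of_not_fin h]; exact top_ne_bot

lemma llr_ae_eq {X : Type*} [MeasurableSpace X] {μ ν : Measure X}
    [IsProbabilityMeasure μ] [IsProbabilityMeasure ν] (h : μ ≪ ν) :
    llr μ ν =ᵐ[μ] fun x => - Real.log (ν.rnDeriv μ x).toReal := by
  filter_upwards [neg_llr h] with x hx
  simp only [Pi.neg_apply, llr_def ν μ] at hx
  linarith

lemma toReal_rnDeriv_pos_ae {X : Type*} [MeasurableSpace X] {μ ν : Measure X}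
    [IsProbabilityMeasure μ] [IsProbabilityMeasure ν] (h : μ ≪ ν) :
    ∀ᵐ x ∂μ, 0 < (ν.rnDeriv μ x).toReal := by
  filter_upwards [Measure.rnDeriv_pos' h, Measure.rnDeriv_lt_top ν μ] with x h1 h2
  exact ENNReal.toReal_pos h1.ne' h2.ne

lemma finKL_of_le {X : Type*} [MeasurableSpace X] {μ ν : Measure X}
    [IsProbabilityMeasure μ] [IsProbabilityMeasure ν] (h : μ ≪ ν) (f : X → ℝ)
    (hf : Integrable f μ) (hle : llr μ ν ≤ᵐ[μ] f) : FinKL μ ν := by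
  refine ⟨h, integrable_of_le_of_le (measurable_llr μ ν).aestronglyMeasurable
    (g₁ := fun x => 1 - (ν.rnDeriv μ x).toReal) ?_ hle
    ((integrable_const _).sub Measure.integrable_toReal_rnDeriv) hf⟩
  filter_upwards [llr_ae_eq h, toReal_rnDeriv_pos_ae h] with x hx hpos
  rw [hx]
  have := Real.log_le_sub_one_of_pos hpos
  linarith

/-- Domination lemma. -/
lemma finKL_dom {X : Type*} [MeasurableSpace X] {μ ν ν' : Measure X}
    [IsProbabilityMeasure μ] [IsProbabilityMeasure ν] [IsProbabilityMeasure ν']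
    {c : ℝ} (hc : 0 < c) (hle : ENNReal.ofReal c • ν' ≤ ν) (h : FinKL μ ν') :
    FinKL μ ν ∧ ∫ x, llr μ ν x ∂μ ≤ ∫ x, llr μ ν' x ∂μ - Real.log c := by
  have hfin : IsFiniteMeasure (ENNReal.ofReal c • ν') := isFiniteMeasure_of_le ν hle
  have hac : ν' ≪ ν := by
    refine Measure.AbsolutelyContinuous.trans ?_ (Measure.absolutelyContinuous_of_le hle)
    exact Measure.absolutelyContinuous_smul (by simpa using hc)
  have hμν : μ ≪ ν := h.1.trans hac
  have hsub : IsFiniteMeasure (ν - ENNReal.ofReal c • ν') :=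
    isFiniteMeasure_of_le ν Measure.sub_le
  have hadd := Measure.rnDeriv_add' (ν - ENNReal.ofReal c • ν') (ENNReal.ofReal c • ν') μ
  rw [Measure.sub_add_cancel_of_le hle] at hadd
  have hbound : llr μ ν ≤ᵐ[μ] fun x => llr μ ν' x - Real.log c := by
    filter_upwards [llr_ae_eq hμν, llr_ae_eq h.1, toReal_rnDeriv_pos_ae h.1, hadd,
      Measure.rnDeriv_smul_left_of_ne_top' ν' μ (ENNReal.ofReal_ne_top (r := c)),
      Measure.rnDeriv_lt_top ν μ]
      with x h1 h2 h3 h4 h5 h6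
    rw [h1, h2]
    have : c * (ν'.rnDeriv μ x).toReal ≤ (ν.rnDeriv μ x).toReal := by
      have h7 : ENNReal.ofReal c * ν'.rnDeriv μ x ≤ ν.rnDeriv μ x := by
        rw [h4, Pi.add_apply, h5]
        simp
      have := ENNReal.toReal_mono h6.ne h7
      rwa [ENNReal.toReal_mul, ENNReal.toReal_ofReal hc.le] at this
    have h8 := Real.log_le_log (mul_pos hc h3) this
    rw [Real.log_mul hc.ne' h3.ne'] at h8
    linarith
  have hint : Integrable (fun x => llr μ ν' x - Real.log c) μ := h.2.sub (integrable_const _)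
  have hF := finKL_of_le hμν _ hint hbound
  refine ⟨hF, ?_⟩
  have := integral_mono_ae hF.2 hint hbound
  rw [integral_sub h.2 (integrable_const _)] at this
  simpa using this

lemma finKL_self {X : Type*} [MeasurableSpace X] (μ : Measure X) [IsProbabilityMeasure μ] :
    FinKL μ μ :=
  finKL_of_le Measure.AbsolutelyContinuous.rfl 0 (integrable_zero _ _ _) (llr_self μ).le

/-- Comparison of divergences to `p` and to a dominating `pm`. -/
lemma kl_compare {X : Type*} [MeasurableSpace X] {μ pm p : Measure X}
    [IsProbabilityMeasure μ] [IsProbabilityMeasure pm] [IsProbabilityMeasure p]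
    (h1 : FinKL μ pm) (h2 : FinKL μ p) (h3 : pm ≪ p)
    (hr : Integrable (fun x => (p.rnDeriv pm x).toReal) μ) :
    ∫ x, llr μ pm x ∂μ + 1 - ∫ x, (p.rnDeriv pm x).toReal ∂μ ≤ ∫ x, llr μ p x ∂μ := by
  have hae : (fun x => llr μ pm x + 1 - (p.rnDeriv pm x).toReal) ≤ᵐ[μ] llr μ p := by
    filter_upwards [h2.1.ae_le (Measure.rnDeriv_mul_rnDeriv (κ := p) h1.1),
      h1.1.ae_le (Measure.inv_rnDeriv h3), Measure.rnDeriv_pos h2.1,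
      h2.1.ae_le (Measure.rnDeriv_lt_top μ p), h2.1.ae_le (Measure.rnDeriv_lt_top pm p),
      h1.1.ae_le (Measure.rnDeriv_lt_top μ pm)] with x e1 e2 e3 e4 e5 e6
    simp only [llr_def]
    rw [← e1, ← e2]
    simp only [Pi.mul_apply, Pi.inv_apply, ENNReal.toReal_mul, ENNReal.toReal_inv]
    rw [← e1] at e3
    simp only [Pi.mul_apply] at e3
    have p1 : 0 < (μ.rnDeriv pm x).toReal :=
      ENNReal.toReal_pos (fun h => by simp [h] at e3) e6.ne
    have p2 : 0 < (pm.rnDeriv p x).toReal :=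
      ENNReal.toReal_pos (fun h => by simp [h] at e3) e5.ne
    rw [Real.log_mul p1.ne' p2.ne']
    have := Real.one_sub_inv_le_log_of_pos p2
    linarith
  have i1 : Integrable (fun x => llr μ pm x + 1) μ := h1.2.add (integrable_const _)
  have := integral_mono_ae (i1.sub hr) h2.2 hae
  simp only [Pi.sub_apply] at this
  rw [integral_sub i1 hr, integral_add h1.2 (integrable_const _)] at this
  simpa using this

lemma integral_rnDeriv_le_one {X : Type*} [MeasurableSpace X] {pm p : Measure X}
    [IsProbabilityMeasure pm] [IsProbabilityMeasure p] :
    ∫ x, (p.rnDeriv pm x).toReal ∂pm ≤ 1 := by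
  rw [Measure.integral_toReal_rnDeriv']
  simp

/-- Lower semicontinuity along segments towards `μ`. -/
lemma kl_lsc {X : Type*} [MeasurableSpace X] {μ ν : Measure X}
    [IsProbabilityMeasure μ] [IsProbabilityMeasure ν] {b : ℝ}
    (h : ∀ s : ℝ, 0 < s → s < 1 →
      FinKL μ (ENNReal.ofReal (1 - s) • ν + ENNReal.ofReal s • μ) ∧
      ∫ x, llr μ (ENNReal.ofReal (1 - s) • ν + ENNReal.ofReal s • μ) x ∂μ ≤ b) :
    FinKL μ ν ∧ ∫ x, llr μ ν x ∂μ ≤ b := by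
  set k : X → ℝ := fun x => (ν.rnDeriv μ x).toReal with hk
  have hk0 : ∀ x, 0 ≤ k x := fun x => ENNReal.toReal_nonneg
  have hkm : Measurable k := (Measure.measurable_rnDeriv ν μ).ennreal_toReal
  have hki : Integrable k μ := Measure.integrable_toReal_rnDeriv
  let s : ℕ → ℝ := fun n => 1 / ((n : ℝ) + 2)
  have hs0 : ∀ n, 0 < s n := fun n => by positivity
  have hs1 : ∀ n, s n < 1 := fun n => by
    simp only [s]
    rw [div_lt_one (by positivity)]
    have : (0 : ℝ) ≤ n := Nat.cast_nonneg n
    linarith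
  have hslim : Tendsto s atTop (𝓝 0) := by
    have h1 := tendsto_const_div_atTop_nhds_zero_nat (1 : ℝ)
    have h2 := (tendsto_add_atTop_iff_nat 2).2 h1
    simpa [s] using h2
  let f : ℕ → X → ℝ := fun n x => - Real.log ((1 - s n) * k x + s n) + k x
  have hfm : ∀ n, Measurable (f n) := fun n => by
    refine Measurable.add (Measurable.neg (Real.measurable_log.comp ?_)) hkm
    exact (hkm.const_mul _).add_const _
  have hf0 : ∀ n x, 0 ≤ f n x := fun n x => by
    have hpos : 0 < (1 - s n) * k x + s n := by
      have := mul_nonneg (sub_nonneg.2 (hs1 n).le) (hk0 x)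
      linarith [hs0 n]
    have := Real.log_le_sub_one_of_pos hpos
    have h3 := mul_nonneg (hs0 n).le (hk0 x)
    simp only [f]
    nlinarith [hs1 n]
  have hfi : ∀ n, Integrable (f n) μ ∧ ∫ x, f n x ∂μ ≤ b + ∫ x, k x ∂μ := fun n => by
    obtain ⟨hF, hb⟩ := h (s n) (hs0 n) (hs1 n)
    have hprob : IsProbabilityMeasure (ENNReal.ofReal (1 - s n) • ν + ENNReal.ofReal (s n) • μ) := by
      constructor
      simp only [Measure.coe_add, Measure.coe_smul, Pi.add_apply, Pi.smul_apply, measure_univ,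
        smul_eq_mul, mul_one]
      rw [← ENNReal.ofReal_add (by linarith [hs1 n]) (hs0 n).le]
      simp
    have hfin1 : IsFiniteMeasure (ENNReal.ofReal (1 - s n) • ν) :=
      ν.smul_finite ENNReal.ofReal_ne_top
    have hfin2 : IsFiniteMeasure (ENNReal.ofReal (s n) • μ) :=
      μ.smul_finite ENNReal.ofReal_ne_top
    have hae : f n =ᵐ[μ]
        fun x => llr μ (ENNReal.ofReal (1 - s n) • ν + ENNReal.ofReal (s n) • μ) x + k x := by
      filter_upwards [llr_ae_eq hF.1,
        Measure.rnDeriv_add' (ENNReal.ofReal (1 - s n) • ν) (ENNReal.ofReal (s n) • μ) μ,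
        Measure.rnDeriv_smul_left_of_ne_top' ν μ (ENNReal.ofReal_ne_top (r := 1 - s n)),
        Measure.rnDeriv_smul_left_of_ne_top' μ μ (ENNReal.ofReal_ne_top (r := s n)),
        Measure.rnDeriv_self μ, Measure.rnDeriv_lt_top ν μ] with x e1 e2 e3 e4 e5 e6
      rw [e1, e2, Pi.add_apply, e3, e4]
      simp only [Pi.smul_apply, smul_eq_mul, e5, mul_one]
      rw [ENNReal.toReal_add (ENNReal.mul_ne_top ENNReal.ofReal_ne_top e6.ne)
        ENNReal.ofReal_ne_top, ENNReal.toReal_mul, ENNReal.toReal_ofReal (by linarith [hs1 n]),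
        ENNReal.toReal_ofReal (hs0 n).le]
    refine ⟨(hF.2.add hki).congr hae.symm, ?_⟩
    rw [integral_congr_ae hae, integral_add hF.2 hki]
    linarith
  have hfl : ∀ n, ∫⁻ x, ENNReal.ofReal (f n x) ∂μ ≤ ENNReal.ofReal (b + ∫ x, k x ∂μ) := fun n => by
    rw [← ofReal_integral_eq_lintegral_ofReal (hfi n).1 (Eventually.of_forall (hf0 n))]
    exact ENNReal.ofReal_le_ofReal (hfi n).2
  have hB0 : 0 ≤ b + ∫ x, k x ∂μ := (integral_nonneg (hf0 0)).trans (hfi 0).2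
  have hfatou : ∫⁻ x, liminf (fun n => ENNReal.ofReal (f n x)) atTop ∂μ
      ≤ ENNReal.ofReal (b + ∫ x, k x ∂μ) := by
    refine (lintegral_liminf_le fun n => (hfm n).ennreal_ofReal).trans ?_
    refine (liminf_le_liminf (Eventually.of_forall hfl)).trans ?_
    simp
  have hlimpos : ∀ x, 0 < k x →
      liminf (fun n => ENNReal.ofReal (f n x)) atTop = ENNReal.ofReal (- Real.log (k x) + k x) := by
    intro x hx
    refine Tendsto.liminf_eq (ENNReal.tendsto_ofReal ?_)
    refine Tendsto.add (Tendsto.neg ?_) tendsto_const_nhds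
    refine Tendsto.log ?_ hx.ne'
    have := ((tendsto_const_nhds (x := (1 : ℝ))).sub hslim).mul_const (k x) |>.add hslim
    simpa using this
  have hlimzero : ∀ x, k x = 0 →
      liminf (fun n => ENNReal.ofReal (f n x)) atTop = ⊤ := by
    intro x hx
    refine Tendsto.liminf_eq ?_
    refine ENNReal.tendsto_ofReal_atTop.comp ?_
    simp only [f, hx, mul_zero, zero_add, add_zero]
    refine tendsto_neg_atBot_atTop.comp (Real.tendsto_log_nhdsGT_zero.comp ?_)
    exact tendsto_nhdsWithin_iff.2 ⟨hslim, Eventually.of_forall hs0⟩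
  have hmeas : Measurable (fun x => liminf (fun n => ENNReal.ofReal (f n x)) atTop) :=
    Measurable.liminf fun n => (hfm n).ennreal_ofReal
  have hkpos : ∀ᵐ x ∂μ, 0 < k x := by
    filter_upwards [ae_lt_top hmeas (hfatou.trans_lt ENNReal.ofReal_lt_top).ne] with x hx
    refine lt_of_le_of_ne (hk0 x) fun h0 => ?_
    rw [hlimzero x h0.symm] at hx
    exact lt_irrefl _ hx
  have hac : μ ≪ ν := by
    refine (withDensity_absolutelyContinuous' (f := ν.rnDeriv μ)
      (Measure.measurable_rnDeriv ν μ).aemeasurable ?_).trans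
      (Measure.absolutelyContinuous_of_le (Measure.withDensity_rnDeriv_le ν μ))
    filter_upwards [hkpos] with x hx h0
    simp [hk, h0] at hx
  let g : X → ℝ := fun x => - Real.log (k x) + k x
  have hgm : Measurable g := (Real.measurable_log.comp hkm).neg.add hkm
  have hg0 : 0 ≤ᵐ[μ] g := by
    filter_upwards [hkpos] with x hx
    have := Real.log_le_sub_one_of_pos hx
    simp only [g, Pi.zero_apply]
    linarith
  have hgl : ∫⁻ x, ENNReal.ofReal (g x) ∂μ ≤ ENNReal.ofReal (b + ∫ x, k x ∂μ) := by
    refine le_trans (le_of_eq (lintegral_congr_ae ?_)) hfatou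
    filter_upwards [hkpos] with x hx
    rw [hlimpos x hx]
  have hgi : Integrable g μ := by
    refine ⟨hgm.aestronglyMeasurable, ?_⟩
    rw [hasFiniteIntegral_iff_ofReal hg0]
    exact hgl.trans_lt ENNReal.ofReal_lt_top
  have hgle : ∫ x, g x ∂μ ≤ b + ∫ x, k x ∂μ := by
    rw [← ofReal_integral_eq_lintegral_ofReal hgi hg0] at hgl
    exact (ENNReal.ofReal_le_ofReal_iff hB0).1 hgl
  have hllr : llr μ ν =ᵐ[μ] fun x => g x - k x := by
    filter_upwards [llr_ae_eq hac] with x hx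
    simp only [g]
    rw [hx]
    ring
  refine ⟨⟨hac, (hgi.sub hki).congr hllr.symm⟩, ?_⟩
  rw [integral_congr_ae hllr, integral_sub hgi hki]
  linarith

/-- All the divergences that matter are finite. -/
def GoodKL {X : Type*} [MeasurableSpace X] {m : ℕ}
    (q : Measure X) (qi : Fin m → Measure X) (l : Fin m → ℝ) (p : Measure X) : Prop :=
  FinKL q p ∧ ∀ i, 0 < l i → FinKL (qi i) p

/-- The real-valued Lagrangian. -/
noncomputable def lagr {X : Type*} [MeasurableSpace X] {m : ℕ}
    (q : Measure X) (qi : Fin m → Measure X) (b : Fin m → ℝ) (l : Fin m → ℝ)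
    (p : Measure X) : ℝ :=
  ∫ x, llr q p x ∂q + ∑ i, l i * (∫ x, llr (qi i) p x ∂(qi i) - b i)

lemma ereal_sum_coe {ι : Type*} (s : Finset ι) (f : ι → ℝ) :
    ∑ i ∈ s, (f i : EReal) = ((∑ i ∈ s, f i : ℝ) : EReal) := by
  classical
  induction s using Finset.induction_on with
  | empty => simp
  | insert a s ha ih => rw [Finset.sum_insert ha, Finset.sum_insert ha, ih, EReal.coe_add]

lemma ereal_sum_ne_bot {ι : Type*} (s : Finset ι) (f : ι → EReal) (h : ∀ i, f i ≠ ⊥) :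
    ∑ i ∈ s, f i ≠ ⊥ := by
  classical
  induction s using Finset.induction_on with
  | empty => simp
  | insert a s ha ih =>
    rw [Finset.sum_insert ha, Ne, EReal.add_eq_bot_iff]
    exact fun h' => h'.elim (h a) ih

lemma lagr_coe {X : Type*} [MeasurableSpace X] {m : ℕ}
    (q : Measure X) (qi : Fin m → Measure X) (b : Fin m → ℝ) (l : Fin m → ℝ)
    (hl : ∀ i, 0 ≤ l i) (p : Measure X) (hg : GoodKL q qi l p) :
    KL q p + ∑ i, (l i : EReal) * (KL (qi i) p - (b i : EReal))
      = ((lagr q qi b l p : ℝ) : EReal) := by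
  have h1 : ∀ i, (l i : EReal) * (KL (qi i) p - (b i : EReal))
      = ((l i * (∫ x, llr (qi i) p x ∂(qi i) - b i) : ℝ) : EReal) := by
    intro i
    rcases (hl i).eq_or_lt with h0 | h0
    · rw [← h0]; simp
    · rw [KL_of_fin (hg.2 i h0), ← EReal.coe_sub, ← EReal.coe_mul]
  rw [KL_of_fin hg.1, Finset.sum_congr rfl fun i _ => h1 i, ereal_sum_coe, ← EReal.coe_add]
  rfl

lemma good_of_ne_top {X : Type*} [MeasurableSpace X] {m : ℕ}
    (q : Measure X) (qi : Fin m → Measure X) (b : Fin m → ℝ) (l : Fin m → ℝ)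
    (hl : ∀ i, 0 ≤ l i) (p : Measure X)
    (h : KL q p + ∑ i, (l i : EReal) * (KL (qi i) p - (b i : EReal)) ≠ ⊤) :
    GoodKL q qi l p := by
  have hb : ∀ i, (l i : EReal) * (KL (qi i) p - (b i : EReal)) ≠ ⊥ := by
    intro i
    rcases (hl i).eq_or_lt with h0 | h0
    · rw [← h0]; simp
    · by_cases hF : FinKL (qi i) p
      · rw [KL_of_fin hF, ← EReal.coe_sub, ← EReal.coe_mul]
        exact EReal.coe_ne_bot _
      · rw [KL_of_not_fin hF, EReal.top_sub_coe, EReal.mul_top_of_pos (by exact_mod_cast h0)]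
        exact top_ne_bot
  refine ⟨?_, ?_⟩
  · by_contra hF
    apply h
    rw [KL_of_not_fin hF, EReal.top_add_of_ne_bot (ereal_sum_ne_bot _ _ hb)]
  · intro i h0
    by_contra hF
    apply h
    have hi : (l i : EReal) * (KL (qi i) p - (b i : EReal)) = ⊤ := by
      rw [KL_of_not_fin hF, EReal.top_sub_coe, EReal.mul_top_of_pos (by exact_mod_cast h0)]
    rw [← Finset.add_sum_erase _ _ (Finset.mem_univ i), hi,
      EReal.top_add_of_ne_bot (ereal_sum_ne_bot _ _ hb), EReal.add_top_of_ne_bot (KL_ne_bot _ _)]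

lemma one_add_sum_pos {m : ℕ} (l : Fin m → ℝ) (hl : ∀ i, 0 ≤ l i) : 0 < 1 + ∑ i, l i := by
  have := Finset.sum_nonneg (s := Finset.univ) fun i _ => hl i
  linarith

lemma qMix_prob {X : Type*} [MeasurableSpace X] {m : ℕ}
    (q : Measure X) [IsProbabilityMeasure q]
    (qi : Fin m → Measure X) (hqi : ∀ i, IsProbabilityMeasure (qi i))
    (l : Fin m → ℝ) (hl : ∀ i, 0 ≤ l i) : IsProbabilityMeasure (qMix q qi l) := by
  constructor
  have hpos := one_add_sum_pos l hl
  simp only [qMix, Measure.coe_smul, Measure.coe_add, Measure.coe_finsetSum, Pi.smul_apply,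
    Pi.add_apply, Finset.sum_apply, measure_univ, smul_eq_mul, mul_one]
  rw [← ENNReal.ofReal_sum_of_nonneg fun i _ => hl i, ← ENNReal.ofReal_one,
    ← ENNReal.ofReal_add zero_le_one (Finset.sum_nonneg fun i _ => hl i)]
  rw [ENNReal.inv_mul_cancel (by simpa using hpos) ENNReal.ofReal_ne_top, ENNReal.ofReal_one]

lemma qMix_ge_q {X : Type*} [MeasurableSpace X] {m : ℕ}
    (q : Measure X) (qi : Fin m → Measure X)
    (l : Fin m → ℝ) (hl : ∀ i, 0 ≤ l i) :
    ENNReal.ofReal (1 + ∑ i, l i)⁻¹ • q ≤ qMix q qi l := by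
  rw [qMix, ENNReal.ofReal_inv_of_pos (one_add_sum_pos l hl), smul_add]
  exact Measure.le_add_right le_rfl

lemma qMix_ge_qi {X : Type*} [MeasurableSpace X] {m : ℕ}
    (q : Measure X) (qi : Fin m → Measure X)
    (l : Fin m → ℝ) (hl : ∀ i, 0 ≤ l i) (i : Fin m) :
    ENNReal.ofReal ((1 + ∑ i, l i)⁻¹ * l i) • qi i ≤ qMix q qi l := by
  rw [qMix, ENNReal.ofReal_mul (inv_nonneg.2 (one_add_sum_pos l hl).le),
    ENNReal.ofReal_inv_of_pos (one_add_sum_pos l hl), smul_add, mul_smul,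
    ← Finset.add_sum_erase _ (fun j => ENNReal.ofReal (l j) • qi j) (Finset.mem_univ i), smul_add]
  exact Measure.le_add_left (Measure.le_add_right le_rfl)

lemma good_qMix {X : Type*} [MeasurableSpace X] {m : ℕ}
    (q : Measure X) [IsProbabilityMeasure q]
    (qi : Fin m → Measure X) (hqi : ∀ i, IsProbabilityMeasure (qi i))
    (l : Fin m → ℝ) (hl : ∀ i, 0 ≤ l i) : GoodKL q qi l (qMix q qi l) := by
  have := qMix_prob q qi hqi l hl
  have hpos := one_add_sum_pos l hl
  refine ⟨(finKL_dom (inv_pos.2 hpos) (qMix_ge_q q qi l hl) (finKL_self q)).1, fun i h0 => ?_⟩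
  exact (finKL_dom (mul_pos (inv_pos.2 hpos) h0) (qMix_ge_qi q qi l hl i) (finKL_self (qi i))).1

/-- The mixture minimizes the Lagrangian. -/
lemma lagr_min {X : Type*} [MeasurableSpace X] {m : ℕ}
    (q : Measure X) [IsProbabilityMeasure q]
    (qi : Fin m → Measure X) (hqi : ∀ i, IsProbabilityMeasure (qi i)) (b : Fin m → ℝ)
    (l : Fin m → ℝ) (hl : ∀ i, 0 ≤ l i) (p : Measure X) [IsProbabilityMeasure p]
    (hg : GoodKL q qi l p) : lagr q qi b l (qMix q qi l) ≤ lagr q qi b l p := by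
  have hprob := qMix_prob q qi hqi l hl
  have hgm := good_qMix q qi hqi l hl
  have hpos := one_add_sum_pos l hl
  have hΛ : ENNReal.ofReal (1 + ∑ i, l i) ≠ 0 := by simpa using hpos
  set pm := qMix q qi l with hpm
  have hac : pm ≪ p := by
    refine Measure.AbsolutelyContinuous.mk fun s _ hs0 => ?_
    simp only [hpm, qMix, Measure.coe_smul, Measure.coe_add, Measure.coe_finsetSum,
      Pi.smul_apply, Pi.add_apply, Finset.sum_apply, smul_eq_mul]
    have : ∀ i, ENNReal.ofReal (l i) * qi i s = 0 := fun i => by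
      rcases (hl i).eq_or_lt with h0 | h0
      · rw [← h0]; simp
      · rw [(hg.2 i h0).1 hs0, mul_zero]
    rw [hg.1.1 hs0, Finset.sum_eq_zero fun i _ => this i]
    simp
  have hr : Integrable (fun x => (p.rnDeriv pm x).toReal) pm := Measure.integrable_toReal_rnDeriv
  have hr1 : ∫ x, (p.rnDeriv pm x).toReal ∂pm ≤ 1 := integral_rnDeriv_le_one
  generalize hrr : (fun x => (p.rnDeriv pm x).toReal) = r at hr
  have hr1 : ∫ x, r x ∂pm ≤ 1 := by rw [← hrr]; exact hr1
  have hr' : Integrable r (q + ∑ i, ENNReal.ofReal (l i) • qi i) := by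
    rw [hpm, qMix] at hr
    exact (integrable_smul_measure (ENNReal.inv_ne_zero.2 ENNReal.ofReal_ne_top)
      (ENNReal.inv_ne_top.2 hΛ)).1 hr
  obtain ⟨hrq, hrs⟩ := integrable_add_measure.1 hr'
  have hri : ∀ i, Integrable r (ENNReal.ofReal (l i) • qi i) := fun i =>
    integrable_finsetSum_measure.1 hrs i (Finset.mem_univ i)
  have hint : ∫ x, r x ∂q + ∑ i, l i * ∫ x, r x ∂(qi i) ≤ 1 + ∑ i, l i := by
    have e : ∫ x, r x ∂pm = (1 + ∑ i, l i)⁻¹ * (∫ x, r x ∂q + ∑ i, l i * ∫ x, r x ∂(qi i)) := by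
      rw [hpm, qMix, integral_smul_measure, integral_add_measure hrq hrs,
        integral_finsetSum_measure fun i _ => hri i, ENNReal.toReal_inv,
        ENNReal.toReal_ofReal hpos.le, smul_eq_mul]
      congr 2
      refine Finset.sum_congr rfl fun i _ => ?_
      rw [integral_smul_measure, ENNReal.toReal_ofReal (hl i), smul_eq_mul]
    rw [e, inv_mul_le_iff₀ hpos, mul_one] at hr1
    exact hr1
  have c0 : ∫ x, llr q pm x ∂q + 1 - ∫ x, r x ∂q ≤ ∫ x, llr q p x ∂q := by
    subst hrr
    exact kl_compare hgm.1 hg.1 hac hrq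
  have ci : ∀ i, l i * (∫ x, llr (qi i) pm x ∂(qi i) - b i) + l i - l i * ∫ x, r x ∂(qi i)
      ≤ l i * (∫ x, llr (qi i) p x ∂(qi i) - b i) := fun i => by
    rcases (hl i).eq_or_lt with h0 | h0
    · rw [← h0]; simp
    · have hri' : Integrable r (qi i) :=
        (integrable_smul_measure (by simpa using h0) ENNReal.ofReal_ne_top).1 (hri i)
      have := kl_compare (hgm.2 i h0) (hg.2 i h0) hac (by rw [hrr]; exact hri')
      have e : ∫ x, (p.rnDeriv pm x).toReal ∂(qi i) = ∫ x, r x ∂(qi i) := by rw [← hrr]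
      rw [e] at this
      nlinarith
  have cs := Finset.sum_le_sum (s := Finset.univ) fun i _ => ci i
  rw [Finset.sum_sub_distrib, Finset.sum_add_distrib] at cs
  unfold lagr
  linarith

lemma dualFn_eq {X : Type*} [MeasurableSpace X] {m : ℕ}
    (q : Measure X) [IsProbabilityMeasure q]
    (qi : Fin m → Measure X) (hqi : ∀ i, IsProbabilityMeasure (qi i)) (b : Fin m → ℝ)
    (l : Fin m → ℝ) (hl : ∀ i, 0 ≤ l i) :
    dualFn q qi b l = ((lagr q qi b l (qMix q qi l) : ℝ) : EReal) := by
  apply le_antisymm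
  · rw [← lagr_coe q qi b l hl _ (good_qMix q qi hqi l hl)]
    exact iInf_le (fun p : {p : Measure X // IsProbabilityMeasure p} =>
      KL q p.1 + ∑ i, (l i : EReal) * (KL (qi i) p.1 - (b i : EReal)))
      ⟨qMix q qi l, qMix_prob q qi hqi l hl⟩
  · refine le_iInf fun p => ?_
    have := p.2
    by_cases h : KL q p.1 + ∑ i, (l i : EReal) * (KL (qi i) p.1 - (b i : EReal)) = ⊤
    · rw [h]; exact le_top
    · have hg := good_of_ne_top q qi b l hl p.1 h
      rw [lagr_coe q qi b l hl _ hg]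
      exact_mod_cast lagr_min q qi hqi b l hl p.1 hg

/-- Comparison of the Lagrangians at a perturbed multiplier. -/
lemma perturb {X : Type*} [MeasurableSpace X] {m : ℕ}
    (q : Measure X) [IsProbabilityMeasure q]
    (qi : Fin m → Measure X) (hqi : ∀ i, IsProbabilityMeasure (qi i)) (b : Fin m → ℝ)
    (l : Fin m → ℝ) (hl : ∀ i, 0 ≤ l i)
    (hmax : ∀ l' : Fin m → ℝ, (∀ i, 0 ≤ l' i) → dualFn q qi b l' ≤ dualFn q qi b l)
    (i : Fin m) (a : ℝ) (ha : 0 < a) :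
    (a - l i) * (∫ x, llr (qi i) (qMix q qi (Function.update l i a)) x ∂(qi i) - b i) ≤ 0 := by
  set l' := Function.update l i a with hl'def
  have hl' : ∀ j, 0 ≤ l' j := fun j => by
    by_cases hj : j = i
    · subst hj; simp [hl'def, ha.le]
    · simp [hl'def, hj, hl j]
  have hp' := qMix_prob q qi hqi l' hl'
  have hg' := good_qMix q qi hqi l' hl'
  have hg : GoodKL q qi l (qMix q qi l') := by
    refine ⟨hg'.1, fun j hj => hg'.2 j ?_⟩
    by_cases hji : j = i
    · subst hji; simp [hl'def, ha]
    · simpa [hl'def, hji] using hj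
  have h1 := hmax l' hl'
  rw [dualFn_eq q qi hqi b l' hl', dualFn_eq q qi hqi b l hl, EReal.coe_le_coe_iff] at h1
  have h2 := h1.trans (lagr_min q qi hqi b l hl _ hg)
  unfold lagr at h2
  rw [add_le_add_iff_left, ← Finset.add_sum_erase _ _ (Finset.mem_univ i),
    ← Finset.add_sum_erase (a := i) _ (fun j => l j * _) (Finset.mem_univ i)] at h2
  have h3 : ∀ j ∈ Finset.univ.erase i,
      l' j * (∫ x, llr (qi j) (qMix q qi l') x ∂(qi j) - b j)
        = l j * (∫ x, llr (qi j) (qMix q qi l') x ∂(qi j) - b j) := fun j hj => by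
    simp [hl'def, Finset.ne_of_mem_erase hj]
  rw [Finset.sum_congr rfl h3, add_le_add_iff_right] at h2
  have h4 : l' i = a := by simp [hl'def]
  rw [h4] at h2
  linarith

lemma sum_update {m : ℕ} (l : Fin m → ℝ) (i : Fin m) (a : ℝ) :
    ∑ j, Function.update l i a j = ∑ j, l j + (a - l i) := by
  rw [Finset.sum_update_of_mem (Finset.mem_univ i),
    ← Finset.add_sum_erase _ l (Finset.mem_univ i), Finset.erase_eq]
  ring

/-- Adding mass to one multiplier moves the mixture towards that component. -/
lemma qMix_update {X : Type*} [MeasurableSpace X] {m : ℕ}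
    (q : Measure X) (qi : Fin m → Measure X)
    (l : Fin m → ℝ) (hl : ∀ i, 0 ≤ l i) (i : Fin m) (s : ℝ) (hs0 : 0 < s) (hs1 : s < 1) :
    qMix q qi (Function.update l i (l i + (1 + ∑ j, l j) * s / (1 - s)))
      = ENNReal.ofReal (1 - s) • qMix q qi l + ENNReal.ofReal s • qi i := by
  have hpos := one_add_sum_pos l hl
  have hs1' : 0 < 1 - s := by linarith
  set t := (1 + ∑ j, l j) * s / (1 - s) with ht
  have ht0 : 0 < t := by positivity
  have hsum : 1 + ∑ j, Function.update l i (l i + t) j = (1 + ∑ j, l j) / (1 - s) := by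
    rw [sum_update, ht]
    field_simp
    ring
  have hmeas : ∑ j, ENNReal.ofReal (Function.update l i (l i + t) j) • qi j
      = ∑ j, ENNReal.ofReal (l j) • qi j + ENNReal.ofReal t • qi i := by
    rw [← Finset.add_sum_erase _ _ (Finset.mem_univ i),
      ← Finset.add_sum_erase _ (fun j => ENNReal.ofReal (l j) • qi j) (Finset.mem_univ i)]
    have : ∀ j ∈ Finset.univ.erase i, ENNReal.ofReal (Function.update l i (l i + t) j) • qi j
        = ENNReal.ofReal (l j) • qi j := fun j hj => by
      simp [Finset.ne_of_mem_erase hj]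
    rw [Finset.sum_congr rfl this, Function.update_self, ENNReal.ofReal_add (hl i) ht0.le, add_smul]
    abel
  rw [qMix, hsum, hmeas, qMix, ← ENNReal.ofReal_inv_of_pos (by positivity),
    ← ENNReal.ofReal_inv_of_pos hpos, smul_smul, ← ENNReal.ofReal_mul hs1'.le, ← add_assoc,
    smul_add _ (q + _), smul_smul, ← ENNReal.ofReal_mul (by positivity)]
  congr 3
  · field_simp
  · rw [ht]; field_simp

lemma qMix_shrink {X : Type*} [MeasurableSpace X] {m : ℕ}
    (q : Measure X) (qi : Fin m → Measure X)
    (l l' : Fin m → ℝ) (hl : ∀ i, 0 ≤ l i) (hl' : ∀ i, 0 ≤ l' i) (c : ℝ) (hc0 : 0 < c) (hc1 : c ≤ 1)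
    (h1 : ∀ i, c * l i ≤ l' i) (h2 : ∀ i, l' i ≤ l i) :
    ENNReal.ofReal c • qMix q qi l ≤ qMix q qi l' := by
  have hpos := one_add_sum_pos l hl
  refine Measure.le_iff.2 fun s _ => ?_
  simp only [qMix, Measure.coe_smul, Measure.coe_add, Measure.coe_finsetSum,
      Pi.smul_apply, Pi.add_apply, Finset.sum_apply, smul_eq_mul]
  rw [mul_left_comm, mul_add, Finset.mul_sum]
  have hS : ∑ i, l' i ≤ ∑ i, l i := Finset.sum_le_sum fun i _ => h2 i
  refine mul_le_mul' ?_ (add_le_add ?_ (Finset.sum_le_sum fun i _ => ?_))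
  · exact ENNReal.inv_le_inv.2 (ENNReal.ofReal_le_ofReal (by linarith))
  · exact mul_le_of_le_one_left' (by simpa using hc1)
  · rw [← mul_assoc, ← ENNReal.ofReal_mul hc0.le]
    exact mul_le_mul' (ENNReal.ofReal_le_ofReal (h1 i)) le_rfl

/-- under the Slater condition, if `λ*` maximizes the dual function over
`ℝ₊ᵐ`, then the mixture `q_mix^{(λ*)}` is an optimal solution of the constrained
problem: it is feasible, and its objective value `KL(q‖q_mix^{(λ*)})` equals the optimal
value of the constrained problem. -/
theorem stmt3 {X : Type*} [MeasurableSpace X] {m : ℕ}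
    (q : Measure X) [IsProbabilityMeasure q]
    (qi : Fin m → Measure X) (hqi : ∀ i, IsProbabilityMeasure (qi i))
    (b : Fin m → ℝ)
    (hSlater : ∃ phat : Measure X, IsProbabilityMeasure phat ∧
      ∃ ζ : ℝ, 0 < ζ ∧ ∀ i, KL (qi i) phat ≤ ((b i - ζ : ℝ) : EReal))
    (lstar : Fin m → ℝ) (hlstar : ∀ i, 0 ≤ lstar i)
    (hmax : ∀ l : Fin m → ℝ, (∀ i, 0 ≤ l i) → dualFn q qi b l ≤ dualFn q qi b lstar) :
    (∀ i, KL (qi i) (qMix q qi lstar) ≤ (b i : EReal)) ∧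
    KL q (qMix q qi lstar)
      = sInf {x : EReal | ∃ p : Measure X, IsProbabilityMeasure p ∧
          (∀ i, KL (qi i) p ≤ (b i : EReal)) ∧ x = KL q p} := by

  have hprob := qMix_prob q qi hqi lstar hlstar
  have hpos := one_add_sum_pos lstar hlstar
  have hgood := good_qMix q qi hqi lstar hlstar
  -- feasibility
  have hfeas : ∀ i, FinKL (qi i) (qMix q qi lstar) ∧
      ∫ x, llr (qi i) (qMix q qi lstar) x ∂(qi i) ≤ b i := by
    intro i
    have := hqi i
    refine kl_lsc fun s hs0 hs1 => ?_
    rw [← qMix_update q qi lstar hlstar i s hs0 hs1]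
    have hs1' : 0 < 1 - s := by linarith
    have ht : 0 < (1 + ∑ j, lstar j) * s / (1 - s) := by positivity
    have ha : 0 < lstar i + (1 + ∑ j, lstar j) * s / (1 - s) := by
      linarith [hlstar i]
    have hl' : ∀ j, 0 ≤ Function.update lstar i
        (lstar i + (1 + ∑ j, lstar j) * s / (1 - s)) j := fun j => by
      by_cases hj : j = i
      · subst hj; simpa using ha.le
      · simp [hj, hlstar j]
    refine ⟨(good_qMix q qi hqi _ hl').2 i (by simpa using ha), ?_⟩
    have h := perturb q qi hqi b lstar hlstar hmax i _ ha
    rw [add_sub_cancel_left] at h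
    have := nonpos_of_mul_nonpos_right h ht
    linarith
  -- complementary slackness
  have hslack : ∀ i, 0 < lstar i → b i ≤ ∫ x, llr (qi i) (qMix q qi lstar) x ∂(qi i) := by
    intro i h0
    have := hqi i
    have key : ∀ c : ℝ, 0 < c → c < 1 →
        b i + Real.log c ≤ ∫ x, llr (qi i) (qMix q qi lstar) x ∂(qi i) := by
      intro c hc0 hc1
      have ha : 0 < c * lstar i := mul_pos hc0 h0
      have hl' : ∀ j, 0 ≤ Function.update lstar i (c * lstar i) j := fun j => by
        by_cases hj : j = i
        · subst hj; simpa using ha.le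
        · simp [hj, hlstar j]
      have hp' := qMix_prob q qi hqi _ hl'
      have hle : ENNReal.ofReal c • qMix q qi lstar
          ≤ qMix q qi (Function.update lstar i (c * lstar i)) := by
        refine qMix_shrink q qi _ _ hlstar hl' c hc0 hc1.le (fun j => ?_) fun j => ?_
        · by_cases hj : j = i
          · subst hj; simp
          · simp only [ne_eq, hj, not_false_eq_true, Function.update_of_ne]
            nlinarith [hlstar j]
        · by_cases hj : j = i
          · subst hj; simp only [Function.update_self]; nlinarith
          · simp [hj]
      have hd := (finKL_dom hc0 hle (hfeas i).1).2
      have h := perturb q qi hqi b lstar hlstar hmax i _ ha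
      have hneg : c * lstar i - lstar i < 0 := by nlinarith
      have := nonneg_of_mul_nonpos_right h hneg
      linarith
    have hlim : Filter.Tendsto (fun c : ℝ => b i + Real.log c) (nhdsWithin 1 (Set.Iio 1))
        (nhds (b i + Real.log 1)) :=
      (((Real.continuousAt_log one_ne_zero).tendsto).mono_left nhdsWithin_le_nhds).const_add _
    rw [Real.log_one, add_zero] at hlim
    refine le_of_tendsto hlim ?_
    filter_upwards [Ioo_mem_nhdsLT (zero_lt_one (α := ℝ))] with c hc
    exact key c hc.1 hc.2
  have hfeasE : ∀ i, KL (qi i) (qMix q qi lstar) ≤ (b i : EReal) := fun i => by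
    rw [KL_of_fin (hfeas i).1]
    exact_mod_cast (hfeas i).2
  refine ⟨hfeasE, le_antisymm ?_ (sInf_le ⟨_, hprob, hfeasE, rfl⟩)⟩
  refine le_sInf ?_
  rintro x ⟨p, hp, hpf, rfl⟩
  by_cases hF : FinKL q p
  swap
  · rw [KL_of_not_fin hF]; exact le_top
  have hFi : ∀ i, FinKL (qi i) p := fun i => by
    by_contra hn
    have := hpf i
    rw [KL_of_not_fin hn, top_le_iff] at this
    exact EReal.coe_ne_top _ this
  have hle : ∀ i, ∫ x, llr (qi i) p x ∂(qi i) ≤ b i := fun i => by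
    have := hpf i
    rw [KL_of_fin (hFi i)] at this
    exact_mod_cast this
  have hmin := lagr_min q qi hqi b lstar hlstar p ⟨hF, fun i _ => hFi i⟩
  unfold lagr at hmin
  have s1 : ∑ i, lstar i * (∫ x, llr (qi i) (qMix q qi lstar) x ∂(qi i) - b i) = 0 := by
    refine Finset.sum_eq_zero fun i _ => ?_
    rcases (hlstar i).eq_or_lt with h0 | h0
    · rw [← h0, zero_mul]
    · rw [le_antisymm (hfeas i).2 (hslack i h0), sub_self, mul_zero]
  have s2 : ∑ i, lstar i * (∫ x, llr (qi i) p x ∂(qi i) - b i) ≤ 0 :=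
    Finset.sum_nonpos fun i _ =>
      mul_nonpos_of_nonneg_of_nonpos (hlstar i) (by linarith [hle i])
  rw [KL_of_fin hF, KL_of_fin hgood.1]
  exact_mod_cast (by linarith : ∫ x, llr q (qMix q qi lstar) x ∂q ≤ ∫ x, llr q p x ∂q)
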